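/- arXiv:2512.04510 — 3 statements merged into one kernel-verified Lean document; each statement's English description precedes it below -/
import Mathlib

section
/- Let $A \in \mathbb{Z}^{m \times n}$ and $b \in \mathbb{Z}^m$ with $m \le n$, and let $L$ be any natural number with $L \ge \sum_{i,j} \lceil \log_2(|a_{ij}|+1) \rceil + \sum_j \lceil \log_2(|b_j|+1) \rceil$. Suppose $B \subseteq \{1,\dots,n\}$ with $|B| = m$ is such that the $m \times m$ submatrix $A_B$ of columns of $A$ indexed by $B$ is invertible, and let $x \in \mathbb{R}^n$ be the associated basic solution, i.e., $x_B = A_B^{-1} b$ and $x_j = 0$ for $j \notin B$. Then for every index $i$, if $x_i > 0$ then $x_i \ge 2^{-L}$. -/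
open Matrix BigOperators

theorem kh_sum_le_prod {ι : Type*} (s : Finset ι) (f : ι → ℕ) :
    ∑ i ∈ s, f i + 1 ≤ ∏ i ∈ s, (f i + 1) := by
  classical
  induction s using Finset.induction_on with
  | empty => simp
  | insert a s ha ih =>
    rw [Finset.sum_insert ha, Finset.prod_insert ha]
    nlinarith [Nat.zero_le (f a), Nat.zero_le (∑ i ∈ s, f i), Nat.mul_le_mul_left (f a) ih]

theorem kh_det_le {m : ℕ} (M : Matrix (Fin m) (Fin m) ℤ) :
    M.det.natAbs ≤ ∏ i, ∏ j, ((M j i).natAbs + 1) := by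
  calc M.det.natAbs ≤ ∑ σ : Equiv.Perm (Fin m), ∏ i, (M (σ i) i).natAbs := by
        rw [Matrix.det_apply]
        refine (Int.natAbs_sum_le _ _).trans (Finset.sum_le_sum fun σ _ => ?_)
        rw [Units.smul_def, smul_eq_mul, Int.natAbs_mul, Int.units_natAbs, one_mul]
        exact (map_prod Int.natAbsHom _ _).le
    _ ≤ ∑ g : Fin m → Fin m, ∏ i, (M (g i) i).natAbs := by
        have := Finset.sum_map (Finset.univ : Finset (Equiv.Perm (Fin m)))
          ⟨fun σ => (σ : Fin m → Fin m), DFunLike.coe_injective⟩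
          (fun g : Fin m → Fin m => ∏ i, (M (g i) i).natAbs)
        simp only [Function.Embedding.coeFn_mk] at this
        rw [← this]
        exact Finset.sum_le_sum_of_subset (Finset.subset_univ _)
    _ = ∏ i, ∑ j, (M j i).natAbs := by
        rw [Finset.prod_univ_sum, Fintype.piFinset_univ]
    _ ≤ _ := Finset.prod_le_prod' fun i _ =>
        (Nat.le_succ _).trans (kh_sum_le_prod Finset.univ fun j => (M j i).natAbs)

/-- **Khachiyan's bound, primal half.** If `A ∈ ℤ^{m×n}`, `b ∈ ℤ^m`, `m ≤ n`, and
`L ≥ ∑_{i,j} ⌈log₂(|a_ij|+1)⌉ + ∑_j ⌈log₂(|b_j|+1)⌉`, then every positive entry of a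
basic solution `x` (supported on a basis `B = range φ` with `A_B` invertible and
`A_B x_B = b`) satisfies `x_i ≥ 2^{-L}`. -/
theorem basic_solution_lower_bound
    (m n : ℕ) (hmn : m ≤ n)
    (A : Matrix (Fin m) (Fin n) ℤ) (b : Fin m → ℤ) (L : ℕ)
    (hL : (∑ i, ∑ j, Nat.clog 2 ((A i j).natAbs + 1))
            + (∑ j, Nat.clog 2 ((b j).natAbs + 1)) ≤ L)
    (φ : Fin m → Fin n) (hφ : Function.Injective φ)
    (hinv : IsUnit ((A.map (Int.cast : ℤ → ℝ)).submatrix id φ))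
    (x : Fin n → ℝ)
    (hxB : ((A.map (Int.cast : ℤ → ℝ)).submatrix id φ).mulVec (fun k => x (φ k))
            = fun i => (b i : ℝ))
    (hx0 : ∀ j, j ∉ Set.range φ → x j = 0) :
    ∀ i, 0 < x i → (2 : ℝ) ^ (-(L : ℤ)) ≤ x i := by
  intro i hi
  have hiφ : i ∈ Set.range φ := by
    by_contra h
    rw [hx0 i h] at hi
    exact lt_irrefl _ hi
  obtain ⟨k, rfl⟩ := hiφ
  set M : Matrix (Fin m) (Fin m) ℤ := A.submatrix id φ with hM
  have hMR : (A.map (Int.cast : ℤ → ℝ)).submatrix id φ = M.map (Int.castRingHom ℝ) := by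
    ext a c; simp [hM]
  rw [hMR] at hxB hinv
  have hdet : (M.map (Int.castRingHom ℝ)).det = (M.det : ℝ) := by
    have := (RingHom.map_det (Int.castRingHom ℝ) M).symm
    simpa using this
  have hdet0 : M.det ≠ 0 := by
    have h := (Matrix.isUnit_iff_isUnit_det _).1 hinv
    rw [hdet] at h
    exact_mod_cast h.ne_zero
  have key : (M.det : ℝ) * x (φ k) = ((M.adjugate.mulVec b k : ℤ) : ℝ) := by
    have h := congrFun (congrArg ((M.map (Int.castRingHom ℝ)).adjugate.mulVec) hxB) k
    rw [Matrix.mulVec_mulVec, Matrix.adjugate_mul, hdet, Matrix.smul_mulVec,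
      Matrix.one_mulVec] at h
    have h2 : (M.map (Int.castRingHom ℝ)).adjugate = M.adjugate.map (Int.castRingHom ℝ) :=
      (RingHom.map_adjugate (Int.castRingHom ℝ) M).symm
    rw [h2] at h
    simpa [Matrix.mulVec, dotProduct] using h
  have hbound : M.det.natAbs ≤ 2 ^ L := by
    have hφ' : ∀ f : Fin n → ℕ, ∑ a, f (φ a) ≤ ∑ j, f j := by
      intro f
      have := Finset.sum_map (Finset.univ : Finset (Fin m)) ⟨φ, hφ⟩ f
      simp only [Function.Embedding.coeFn_mk] at this
      rw [← this]
      exact Finset.sum_le_sum_of_subset (Finset.subset_univ _)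
    calc M.det.natAbs ≤ ∏ a, ∏ j, ((M j a).natAbs + 1) := kh_det_le M
      _ ≤ ∏ a, ∏ j, 2 ^ Nat.clog 2 ((M j a).natAbs + 1) :=
        Finset.prod_le_prod' fun a _ => Finset.prod_le_prod' fun j _ =>
          Nat.le_pow_clog one_lt_two _
      _ = 2 ^ (∑ a, ∑ j, Nat.clog 2 ((M j a).natAbs + 1)) := by
        simp only [Finset.prod_pow_eq_pow_sum]
      _ ≤ 2 ^ L := by
        refine Nat.pow_le_pow_right two_pos ?_
        rw [Finset.sum_comm]
        refine le_trans ?_ ((Nat.le_add_right _ _).trans hL)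
        exact Finset.sum_le_sum fun j _ =>
          hφ' fun c => Nat.clog 2 ((A j c).natAbs + 1)
  have hN0 : M.adjugate.mulVec b k ≠ 0 := by
    intro h
    rw [h, Int.cast_zero] at key
    rcases mul_eq_zero.1 key with h1 | h1
    · exact hdet0 (by exact_mod_cast h1)
    · exact hi.ne' h1
  have h1 : (1 : ℝ) ≤ |((M.adjugate.mulVec b k : ℤ) : ℝ)| := by
    exact_mod_cast Int.one_le_abs hN0
  rw [← key, abs_mul, abs_of_pos hi] at h1
  have h3 : |(M.det : ℝ)| ≤ 2 ^ L := by
    rw [← Int.cast_abs, ← Nat.cast_natAbs]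
    exact_mod_cast hbound
  rw [_root_.zpow_neg, _root_.zpow_natCast, inv_le_iff_one_le_mul₀' (by positivity)]
  exact h1.trans (mul_le_mul_of_nonneg_right h3 hi.le)
end

section
/- Let $A \in \mathbb{Z}^{m \times n}$ and $c \in \mathbb{Z}^n$ with $m \le n$, and let $L$ be any natural number with $L \ge \sum_{i,j} \lceil \log_2(|a_{ij}|+1) \rceil + \sum_i \lceil \log_2(|c_i|+1) \rceil$. Suppose $B \subseteq \{1,\dots,n\}$ with $|B| = m$ is such that the column submatrix $A_B$ is invertible, and let $(y, s)$ be the associated basic dual solution, i.e., $y = (A_B^T)^{-1} c_B$ and $s = c - A^T y$. Then for every index $i$, if $s_i > 0$ then $s_i \ge 2^{-L}$. -/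
open Matrix BigOperators

theorem khach_det_bound {m : ℕ} (M : Matrix (Fin m) (Fin m) ℤ) :
    |M.det| ≤ ∏ i, ∏ j, (|M j i| + 1) := by
  have h1 : |M.det| ≤ ∑ σ : Equiv.Perm (Fin m), ∏ i, |M (σ i) i| := by
    rw [Matrix.det_apply']
    refine (Finset.abs_sum_le_sum_abs _ _).trans (Finset.sum_le_sum fun σ _ => ?_)
    rw [abs_mul, Finset.abs_prod]
    rcases Int.units_eq_one_or (Equiv.Perm.sign σ) with h | h <;> simp [h]
  have h2 : ∑ σ : Equiv.Perm (Fin m), ∏ i, |M (σ i) i| ≤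
      ∑ f : Fin m → Fin m, ∏ i, |M (f i) i| := by
    have hinj : Function.Injective (fun σ : Equiv.Perm (Fin m) => (σ : Fin m → Fin m)) :=
      DFunLike.coe_injective
    have := Finset.sum_image (s := (Finset.univ : Finset (Equiv.Perm (Fin m))))
      (g := fun σ : Equiv.Perm (Fin m) => (σ : Fin m → Fin m))
      (f := fun f : Fin m → Fin m => ∏ i, |M (f i) i|) (hinj.injOn)
    rw [← this]
    exact Finset.sum_le_sum_of_subset_of_nonneg (Finset.subset_univ _)
      fun f _ _ => Finset.prod_nonneg fun i _ => abs_nonneg _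
  have h3 : ∑ f : Fin m → Fin m, ∏ i, |M (f i) i| = ∏ i, ∑ j, |M j i| := by
    rw [Finset.prod_univ_sum, Fintype.piFinset_univ]
  have h4 : ∀ (t : Finset (Fin m)) (i : Fin m),
      ∑ j ∈ t, |M j i| + 1 ≤ ∏ j ∈ t, (|M j i| + 1) := by
    intro t i
    induction t using Finset.induction_on with
    | empty => simp
    | insert a t ha ih =>
      rw [Finset.sum_insert ha, Finset.prod_insert ha]
      have := Finset.sum_nonneg (s := t) (f := fun j => |M j i|) fun j _ => abs_nonneg _
      nlinarith [abs_nonneg (M a i)]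
  calc |M.det| ≤ ∏ i, ∑ j, |M j i| := by rw [← h3]; exact h1.trans h2
    _ ≤ _ := Finset.prod_le_prod (fun i _ => Finset.sum_nonneg fun j _ => abs_nonneg _)
        fun i _ => by have := h4 Finset.univ i; omega

/-- **Khachiyan's bound, dual half.** If `A ∈ ℤ^{m×n}`, `c ∈ ℤ^n`, `m ≤ n`, and
`L ≥ ∑_{i,j} ⌈log₂(|a_ij|+1)⌉ + ∑_i ⌈log₂(|c_i|+1)⌉`, then for a basic dual solution
`y = (A_Bᵀ)⁻¹ c_B`, `s = c - Aᵀ y` (basis `B = range φ` with `A_B` invertible),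
every positive entry of `s` satisfies `s_i ≥ 2^{-L}`. -/
theorem basic_dual_solution_lower_bound
    (m n : ℕ) (hmn : m ≤ n)
    (A : Matrix (Fin m) (Fin n) ℤ) (c : Fin n → ℤ) (L : ℕ)
    (hL : (∑ i, ∑ j, Nat.clog 2 ((A i j).natAbs + 1))
            + (∑ i, Nat.clog 2 ((c i).natAbs + 1)) ≤ L)
    (φ : Fin m → Fin n) (hφ : Function.Injective φ)
    (hinv : IsUnit ((A.map (Int.cast : ℤ → ℝ)).submatrix id φ))
    (y : Fin m → ℝ) (s : Fin n → ℝ)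
    (hy : ((A.map (Int.cast : ℤ → ℝ)).submatrix id φ)ᵀ.mulVec y
            = fun k => (c (φ k) : ℝ))
    (hs : s = (fun i => (c i : ℝ)) - (A.map (Int.cast : ℤ → ℝ))ᵀ.mulVec y) :
    ∀ i, 0 < s i → (2 : ℝ) ^ (-(L : ℤ)) ≤ s i := by
  intro i hi
  set M : Matrix (Fin m) (Fin m) ℤ := A.submatrix id φ with hM
  have hMR : (A.map (Int.cast : ℤ → ℝ)).submatrix id φ = M.map (Int.cast : ℤ → ℝ) := rfl
  rw [hMR] at hinv hy
  have hdetR : (M.map (Int.cast : ℤ → ℝ)).det = ((M.det : ℤ) : ℝ) :=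
    ((Int.castRingHom ℝ).map_det M).symm
  have hdet0 : M.det ≠ 0 := by
    rw [Matrix.isUnit_iff_isUnit_det, hdetR] at hinv
    exact_mod_cast hinv.ne_zero
  -- the determinant is at most two to the power L
  have hsumle : ∑ k, ∑ j, Nat.clog 2 ((M j k).natAbs + 1) ≤ L := by
    refine le_trans ?_ hL
    refine le_trans ?_ (Nat.le_add_right _ _)
    rw [Finset.sum_comm]
    refine Finset.sum_le_sum fun j _ => ?_
    have := Finset.sum_image (s := (Finset.univ : Finset (Fin m))) (g := φ)
      (f := fun k => Nat.clog 2 ((A j k).natAbs + 1)) hφ.injOn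
    refine (this.symm.le).trans ?_
    exact Finset.sum_le_sum_of_subset (Finset.subset_univ _)
  have hdetL : |M.det| ≤ 2 ^ L := by
    refine (khach_det_bound M).trans ?_
    calc ∏ k, ∏ j, (|M j k| + 1)
        ≤ ∏ k, ∏ j, (2 : ℤ) ^ Nat.clog 2 ((M j k).natAbs + 1) := by
          refine Finset.prod_le_prod
            (fun k _ => Finset.prod_nonneg fun j _ => by positivity) fun k _ =>
            Finset.prod_le_prod (fun j _ => by positivity) fun j _ => ?_
          have := Nat.le_pow_clog (b := 2) (by norm_num) ((M j k).natAbs + 1)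
          rw [Int.abs_eq_natAbs]
          exact_mod_cast this
      _ = (2 : ℤ) ^ (∑ k, ∑ j, Nat.clog 2 ((M j k).natAbs + 1)) := by
          simp only [Finset.prod_pow_eq_pow_sum]
      _ ≤ 2 ^ L := pow_le_pow_right₀ (by norm_num) hsumle
  -- det times y is integral
  obtain ⟨z, hz⟩ : ∃ z : Fin m → ℤ, ∀ k, (M.det : ℝ) * y k = z k := by
    refine ⟨(Mᵀ.adjugate).mulVec (fun k => c (φ k)), fun k => ?_⟩
    have h := congrArg (fun v => ((M.map (Int.cast : ℤ → ℝ))ᵀ.adjugate).mulVec v) hy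
    simp only [Matrix.mulVec_mulVec, Matrix.adjugate_mul, Matrix.det_transpose, hdetR,
      Matrix.smul_mulVec, Matrix.one_mulVec] at h
    have hk := congrFun h k
    simp only [Pi.smul_apply, smul_eq_mul] at hk
    rw [hk]
    have hadj : (M.map (Int.cast : ℤ → ℝ))ᵀ.adjugate
        = (Mᵀ.adjugate).map (Int.cast : ℤ → ℝ) :=
      ((Int.castRingHom ℝ).map_adjugate Mᵀ).symm
    rw [hadj]
    simp [Matrix.mulVec, dotProduct]
  have hint : (M.det : ℝ) * s i = ((M.det * c i - ∑ k, A k i * z k : ℤ) : ℝ) := by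
    rw [hs]
    simp only [Int.cast_sub, Int.cast_mul, Int.cast_sum, Pi.sub_apply, Matrix.mulVec, dotProduct, Matrix.transpose_apply,
      Matrix.map_apply, mul_sub, Finset.mul_sum, ← hz]
    congr 1
    exact Finset.sum_congr rfl fun k _ => by ring
  set w : ℤ := M.det * c i - ∑ k, A k i * z k
  have hw : w ≠ 0 := by
    intro h0
    rw [h0] at hint
    have hd : (M.det : ℝ) ≠ 0 := by exact_mod_cast hdet0
    have := mul_ne_zero hd hi.ne'
    simp at hint
    grind
  have hw1 : (1 : ℝ) ≤ |(w : ℝ)| := by exact_mod_cast Int.one_le_abs hw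
  rw [← hint, abs_mul, abs_of_pos hi] at hw1
  have hdR : |(M.det : ℝ)| ≤ 2 ^ L := by exact_mod_cast hdetL
  rw [_root_.zpow_neg, zpow_natCast, inv_le_iff_one_le_mul₀ (by positivity)]
  calc (1 : ℝ) ≤ |(M.det : ℝ)| * s i := hw1
    _ ≤ 2 ^ L * s i := mul_le_mul_of_nonneg_right hdR hi.le
    _ = _ := by ring
end

section
/- Let $M$ be an invertible real $N \times N$ matrix, $\sigma \in \mathbb{R}^N$, $z^* = M^{-1}\sigma$, and let $(z^k)$ satisfy $z^{k+1} = z^k + d^k$ with $\|d^k - M^{-1}(\sigma - M z^k)\|_2 \le \rho\,\|M^{-1}(\sigma - M z^k)\|_2$ for some $0 < \rho \le 1/2$. Let $C = \max(\|z^0 - z^*\|_2, 1)$ and let $L \ge 1$ be a natural number. Then for every $k \ge 4L + \log_2 C + 2$, one has $\|z^k - z^{k-1}\|_2 \le 2^{-4L}$; in particular, the stopping criterion $\|z^k - z^{k-1}\|_2 \le 2^{-4L}$ of the iterative linear solver is triggered after at most $\lceil 4L + \log_2 C + 2 \rceil = \mathcal{O}(L)$ iterations. -/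
open Matrix BigOperators

/-- The Euclidean (ℓ₂) norm of a vector in `ℝ^N`. -/
noncomputable def enorm2 {N : ℕ} (v : Fin N → ℝ) : ℝ :=
  ‖(EuclideanSpace.equiv (Fin N) ℝ).symm v‖

/-- **O(L) iteration bound for the iterative quantum linear solver.** Under the
iterative-refinement contraction hypothesis with relative precision `0 < ρ ≤ 1/2`,
letting `C = max(‖z⁰ - z*‖₂, 1)` and `L ≥ 1`, for every `k ≥ 4L + log₂ C + 2` the
stopping criterion `‖z^k - z^{k-1}‖₂ ≤ 2^{-4L}` holds. -/
theorem iterative_solver_stopping_bound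
    (N : ℕ) (M : Matrix (Fin N) (Fin N) ℝ) (hM : IsUnit M)
    (σ : Fin N → ℝ) (zstar : Fin N → ℝ) (hzstar : zstar = M⁻¹.mulVec σ)
    (ρ : ℝ) (hρ0 : 0 < ρ) (hρ1 : ρ ≤ 1 / 2)
    (z d : ℕ → Fin N → ℝ)
    (hstep : ∀ k, z (k + 1) = z k + d k)
    (happrox : ∀ k, enorm2 (d k - M⁻¹.mulVec (σ - M.mulVec (z k)))
        ≤ ρ * enorm2 (M⁻¹.mulVec (σ - M.mulVec (z k))))
    (C : ℝ) (hC : C = max (enorm2 (z 0 - zstar)) 1)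
    (L : ℕ) (hL : 1 ≤ L) :
    ∀ k : ℕ, 4 * (L : ℝ) + Real.logb 2 C + 2 ≤ (k : ℝ) →
      enorm2 (z k - z (k - 1)) ≤ (2 : ℝ) ^ (-(4 * L : ℤ)) := by
  have hadd : ∀ u v : Fin N → ℝ, enorm2 (u + v) ≤ enorm2 u + enorm2 v := by
    intro u v
    unfold enorm2
    rw [map_add]
    exact norm_add_le _ _
  have hneg : ∀ u : Fin N → ℝ, enorm2 (-u) = enorm2 u := by
    intro u
    unfold enorm2
    rw [map_neg, norm_neg]
  have hnn : ∀ u : Fin N → ℝ, 0 ≤ enorm2 u := fun u => norm_nonneg _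
  have hdet : IsUnit M.det := (Matrix.isUnit_iff_isUnit_det M).mp hM
  have hres : ∀ k, M⁻¹.mulVec (σ - M.mulVec (z k)) = -(z k - zstar) := by
    intro k
    rw [Matrix.mulVec_sub, Matrix.mulVec_mulVec, Matrix.nonsing_inv_mul M hdet,
      Matrix.one_mulVec, ← hzstar, neg_sub]
  have hcon : ∀ k, enorm2 (d k + (z k - zstar)) ≤ 1 / 2 * enorm2 (z k - zstar) := by
    intro k
    have h := happrox k
    rw [hres, hneg, sub_neg_eq_add] at h
    exact h.trans (mul_le_mul_of_nonneg_right hρ1 (hnn _))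
  have hC1 : 1 ≤ C := hC ▸ le_max_right _ _
  have herr : ∀ k, enorm2 (z k - zstar) ≤ (1 / 2) ^ k * C := by
    intro k
    induction k with
    | zero => rw [pow_zero, one_mul, hC]; exact le_max_left _ _
    | succ k ih =>
      have h : z (k + 1) - zstar = d k + (z k - zstar) := by rw [hstep]; abel
      rw [h, pow_succ]
      linarith [hcon k]
  intro k hk
  have hlog : 0 ≤ Real.logb 2 C := Real.logb_nonneg (by norm_num) hC1
  obtain ⟨j, rfl⟩ : ∃ j, k = j + 1 := by
    refine Nat.exists_eq_succ_of_ne_zero ?_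
    rintro rfl
    have : (0 : ℝ) ≤ L := Nat.cast_nonneg L
    push_cast at hk
    linarith
  have hd : enorm2 (d j) ≤ 3 / 2 * ((1 / 2) ^ j * C) := by
    have h := hadd (d j + (z j - zstar)) (-(z j - zstar))
    rw [hneg, add_neg_cancel_right] at h
    linarith [hcon j, herr j]
  have hz : z (j + 1) - z (j + 1 - 1) = d j := by
    rw [Nat.add_sub_cancel, hstep]; abel
  rw [hz]
  have hpow : C * 2 ^ (4 * L + 2) ≤ (2 : ℝ) ^ (j + 1) := by
    have h1 : (2 : ℝ) ^ (Real.logb 2 C + ((4 * L + 2 : ℕ) : ℝ)) ≤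
        (2 : ℝ) ^ (((j + 1 : ℕ)) : ℝ) := by
      apply Real.rpow_le_rpow_of_exponent_le (by norm_num)
      push_cast at hk ⊢
      linarith
    rwa [Real.rpow_add (by norm_num), Real.rpow_logb (by norm_num) (by norm_num) (by linarith),
      Real.rpow_natCast, Real.rpow_natCast] at h1
  have hE : (2 : ℝ) ^ (-(4 * L : ℤ)) = 1 / 2 ^ (4 * L) := by
    rw [_root_.zpow_neg, one_div]
    norm_cast
  rw [hE]
  refine hd.trans ?_
  rw [pow_add, pow_succ 2 j] at hpow
  have hA : (0 : ℝ) < 2 ^ (4 * L) := by positivity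
  have hB : (0 : ℝ) < 2 ^ j := by positivity
  rw [le_div_iff₀ hA, _root_.one_div_pow]
  have h3 : 3 / 2 * (1 / 2 ^ j * C) * 2 ^ (4 * L) = (3 / 2 * (C * 2 ^ (4 * L))) / (2 : ℝ) ^ j := by
    field_simp
  rw [h3, div_le_one hB]
  have : 0 ≤ C * 2 ^ (4 * L) := by positivity
  nlinarith
end
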